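/- arXiv:1808.00070 — 7 statements merged into one kernel-verified Lean document; each statement's English description precedes it below -/
import Mathlib

section
/- Let k ≥ 2 be an even integer and let D be a finite digraph belonging to the family 𝒟₁. Then the Cartesian product D □ C_k^0 is an ECD digraph. -/
/-- The closed out-neighborhood of `v` in the digraph with arc relation `A`. -/
def closedOut {V : Type*} (A : V → V → Prop) (v : V) : Set V := {v} ∪ {u | A v u}

/-- `S` is an efficient closed dominating (ECD) set: the closed out-neighborhoods
centered in vertices of `S` are pairwise disjoint and cover the whole vertex set. -/
def IsECD {V : Type*} (A : V → V → Prop) (S : Set V) : Prop :=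
  (∀ v ∈ S, ∀ w ∈ S, v ≠ w → closedOut A v ∩ closedOut A w = ∅) ∧
  (⋃ v ∈ S, closedOut A v) = Set.univ

/-- A digraph is an ECD digraph if it admits an ECD set. -/
def IsECDDigraph {V : Type*} (A : V → V → Prop) : Prop := ∃ S, IsECD A S

/-- `S` is an ECD set of the subdigraph induced by `T` (neighborhoods restricted to `T`). -/
def IsECDWithin {V : Type*} (A : V → V → Prop) (T S : Set V) : Prop :=
  S ⊆ T ∧
  (∀ v ∈ S, ∀ w ∈ S, v ≠ w → (closedOut A v ∩ T) ∩ (closedOut A w ∩ T) = ∅) ∧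
  (⋃ v ∈ S, closedOut A v ∩ T) = T

/-- Arc relation of the Cartesian product of two digraphs. -/
def cartArc {V W : Type*} (A : V → V → Prop) (B : W → W → Prop) :
    V × W → V × W → Prop :=
  fun p q => (A p.1 q.1 ∧ p.2 = q.2) ∨ (p.1 = q.1 ∧ B p.2 q.2)

/-- Arc relation of the directed cycle `C_k^0` on `ZMod k`: arcs `(i, i+1)`. -/
def cycArc (k : ℕ) : ZMod k → ZMod k → Prop := fun i j => j = i + 1

/-- The subdigraph induced by `T` belongs to `𝒟₁` with the partition `W, Z, V'`. -/
def InD1OnParts {V : Type*} (A : V → V → Prop) (T W Z V' : Set V) : Prop :=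
  W ∪ Z ∪ V' = T ∧ Disjoint W Z ∧ Disjoint W V' ∧ Disjoint Z V' ∧
  IsECDWithin A (W ∪ V') W ∧ IsECDWithin A (Z ∪ V') Z ∧
  ∀ w ∈ W, ∀ z ∈ Z, ¬ A w z ∧ ¬ A z w

/-- The subdigraph induced by `T` belongs to the family `𝒟₁`. -/
def InD1On {V : Type*} (A : V → V → Prop) (T : Set V) : Prop :=
  ∃ W Z V', InD1OnParts A T W Z V'

/-- The digraph belongs to the family `𝒟₁`. -/
def InD1 {V : Type*} (A : V → V → Prop) : Prop := InD1On A Set.univ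

/-- The subdigraph induced by `T` belongs to the family `𝒟₂`. -/
def InD2On {V : Type*} (A : V → V → Prop) (T : Set V) : Prop :=
  ∃ U1 U2 U3 : Set V, U1 ∪ U2 ∪ U3 = T ∧
    Disjoint U1 U2 ∧ Disjoint U1 U3 ∧ Disjoint U2 U3 ∧
    (∀ x ∈ T, ∀ y ∈ T, A x y →
      (x ∈ U1 ∧ y ∈ U2) ∨ (x ∈ U2 ∧ y ∈ U3) ∨ (x ∈ U3 ∧ y ∈ U1)) ∧
    IsECDWithin A (U1 ∪ U2) U1 ∧ IsECDWithin A (U2 ∪ U3) U2 ∧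
    IsECDWithin A (U3 ∪ U1) U3

/-- The digraph belongs to the family `𝒟₂`. -/
def InD2 {V : Type*} (A : V → V → Prop) : Prop := InD2On A Set.univ

/-- The digraph belongs to the family `𝒟₃`. -/
def InD3 {V : Type*} (A : V → V → Prop) : Prop :=
  ∃ V1 V2 W Z V' : Set V, V1 ∪ V2 = Set.univ ∧ Disjoint V1 V2 ∧
    InD1OnParts A V1 W Z V' ∧ InD2On A V2 ∧
    (∀ x y, A x y →
      (x ∈ V1 ∧ y ∈ V1) ∨ (x ∈ V2 ∧ y ∈ V2) ∨ (x ∈ V' ∧ y ∈ V2)) ∧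
    ∃ x ∈ V', ∃ y ∈ V2, A x y

/-- Elementary unpacking of `IsECDWithin`. -/
theorem IsECDWithin.elim' {V : Type*} {A : V → V → Prop} {T S : Set V}
    (h : IsECDWithin A T S) :
    (∀ v ∈ S, ∀ w ∈ S, ∀ x ∈ T, (x = v ∨ A v x) → (x = w ∨ A w x) → v = w) ∧
    (∀ x ∈ T, ∃ v ∈ S, x = v ∨ A v x) := by
  obtain ⟨-, h1, h2⟩ := h
  refine ⟨fun v hv w hw x hx a b => ?_, fun x hx => ?_⟩
  · by_contra hne
    have h3 : x ∈ (closedOut A v ∩ T) ∩ (closedOut A w ∩ T) := ⟨⟨a, hx⟩, ⟨b, hx⟩⟩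
    rw [h1 v hv w hw hne] at h3
    exact h3
  · rw [← h2] at hx
    simp only [Set.mem_iUnion] at hx
    obtain ⟨v, hv, hx, -⟩ := hx
    exact ⟨v, hv, hx⟩

/-- A parity predicate on `ZMod k` for even `k`. -/
theorem exists_parity (k : ℕ) (hke : Even k) :
    ∃ P : ZMod k → Prop, ∀ i, P (i + 1) ↔ ¬ P i := by
  refine ⟨fun i => ZMod.castHom hke.two_dvd (ZMod 2) i = 0, fun i => ?_⟩
  simp only [map_add, map_one]
  generalize ZMod.castHom hke.two_dvd (ZMod 2) i = a
  revert a
  decide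

/-- If `k ≥ 2` is even and the finite digraph `D` belongs to `𝒟₁`,
then `D □ C_k^0` is an ECD digraph. -/
theorem cart_cycle_ecd_of_d1 {V : Type*} [Fintype V] (A : V → V → Prop)
    (k : ℕ) (hk : 2 ≤ k) (hke : Even k) (hD : InD1 A) :
    IsECDDigraph (cartArc A (cycArc k)) := by
  obtain ⟨P, hP⟩ := exists_parity k hke
  obtain ⟨W, Z, V', hU, hWZ, -, -, hW, hZ, hno⟩ := hD
  obtain ⟨hW1, hW2⟩ := hW.elim'
  obtain ⟨hZ1, hZ2⟩ := hZ.elim'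
  have hd : ∀ x ∈ W, x ∉ Z := fun x hx hz => Set.disjoint_left.1 hWZ hx hz
  have hc : ∀ x, x ∈ W ∨ x ∈ Z ∨ x ∈ V' := by
    intro x
    have : x ∈ W ∪ Z ∪ V' := hU ▸ Set.mem_univ x
    simpa [or_assoc] using this
  simp only [Set.mem_union] at hW1 hW2 hZ1 hZ2
  refine ⟨{p | (p.1 ∈ W ∧ P p.2) ∨ (p.1 ∈ Z ∧ ¬ P p.2)}, ?_, ?_⟩
  · rintro ⟨v, i⟩ hv ⟨w, j⟩ hw hne
    ext ⟨x, l⟩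
    simp only [closedOut, cartArc, cycArc, Set.mem_inter_iff, Set.mem_union, Set.mem_singleton_iff,
      Set.mem_ofPred_eq, Prod.mk.injEq, Set.mem_empty_iff_false, iff_false] at *
    rintro ⟨ha, hb⟩
    apply hne
    have ha' : ((x = v ∨ A v x) ∧ l = i) ∨ (x = v ∧ l = i + 1) := by
      rcases ha with ⟨h1, h2⟩ | ⟨h1, h2⟩ | ⟨h1, h2⟩
      · exact Or.inl ⟨Or.inl h1, h2⟩
      · exact Or.inl ⟨Or.inr h1, h2.symm⟩
      · exact Or.inr ⟨h1.symm, h2⟩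
    have hb' : ((x = w ∨ A w x) ∧ l = j) ∨ (x = w ∧ l = j + 1) := by
      rcases hb with ⟨h1, h2⟩ | ⟨h1, h2⟩ | ⟨h1, h2⟩
      · exact Or.inl ⟨Or.inl h1, h2⟩
      · exact Or.inl ⟨Or.inr h1, h2.symm⟩
      · exact Or.inr ⟨h1.symm, h2⟩
    clear ha hb
    rcases ha' with ⟨ha, rfl⟩ | ⟨rfl, rfl⟩
    · rcases hb' with ⟨hb, rfl⟩ | ⟨rfl, rfl⟩
      · grind
      · grind
    · rcases hb' with ⟨hb, rfl⟩ | ⟨rfl, hl⟩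
      · grind
      · exact Prod.ext rfl (add_right_cancel hl)
  · ext ⟨x, l⟩
    simp only [Set.mem_iUnion, Set.mem_univ, iff_true]
    have hl := hP (l - 1)
    rw [sub_add_cancel] at hl
    have key : (∃ v, ((v ∈ W ∧ P l) ∨ (v ∈ Z ∧ ¬ P l)) ∧ (x = v ∨ A v x)) ∨
        ((x ∈ W ∧ P (l - 1)) ∨ (x ∈ Z ∧ ¬ P (l - 1))) := by
      grind
    rcases key with ⟨v, hv, hx⟩ | hx
    · refine ⟨(v, l), hv, ?_⟩
      rcases hx with rfl | hx
      · exact Or.inl rfl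
      · exact Or.inr (Or.inl ⟨hx, rfl⟩)
    · exact ⟨(x, l - 1), hx, Or.inr (Or.inr ⟨rfl, (sub_add_cancel l 1).symm⟩)⟩
end

section
/- Let k ≥ 3 be an integer divisible by 3 and let D be a finite digraph belonging to the family 𝒟₂. Then the Cartesian product D □ C_k^0 is an ECD digraph. -/
theorem d2_pred {V : Type*} (A : V → V → Prop) (S T : Set V) (h : IsECDWithin A (S ∪ T) S)
    (hd : Disjoint S T) (y : V) (hy : y ∈ T) :
    (∃ x ∈ S, A x y) ∧ ∀ x ∈ S, ∀ x' ∈ S, A x y → A x' y → x = x' := by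
  obtain ⟨-, h2, h3⟩ := h
  constructor
  · have : y ∈ ⋃ v ∈ S, closedOut A v ∩ (S ∪ T) := by rw [h3]; exact Or.inr hy
    simp only [Set.mem_iUnion] at this
    obtain ⟨x, hx, hxy, -⟩ := this
    rcases hxy with hxy | hxy
    · rw [Set.mem_singleton_iff] at hxy
      subst hxy
      exact absurd hy (Set.disjoint_left.mp hd hx)
    · exact ⟨x, hx, hxy⟩
  · intro x hx x' hx' a a'
    by_contra hne
    have : y ∈ (closedOut A x ∩ (S ∪ T)) ∩ (closedOut A x' ∩ (S ∪ T)) :=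
      ⟨⟨Or.inr a, Or.inr hy⟩, ⟨Or.inr a', Or.inr hy⟩⟩
    rw [h2 x hx x' hx' hne] at this
    exact this

theorem d2_color {V : Type*} (A : V → V → Prop) (hD : InD2 A) :
    ∃ c : V → ZMod 3, (∀ x y, A x y → c y = c x + 1) ∧ (∀ y, ∃ x, A x y) ∧
      ∀ x x' y, A x y → A x' y → x = x' := by
  classical
  obtain ⟨U1, U2, U3, hU, d12, d13, d23, harc, e1, e2, e3⟩ := hD
  have p1 := d2_pred A U1 U2 e1 d12
  have p2 := d2_pred A U2 U3 e2 d23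
  have p3 := d2_pred A U3 U1 e3 d13.symm
  have hcov : ∀ x, x ∈ U1 ∨ x ∈ U2 ∨ x ∈ U3 := by
    intro x
    have : x ∈ U1 ∪ U2 ∪ U3 := by rw [hU]; trivial
    simpa [or_assoc] using this
  have harc' := fun x y => harc x trivial y trivial
  rw [Set.disjoint_left] at d12 d13 d23
  refine ⟨fun v => if v ∈ U1 then 0 else if v ∈ U2 then 1 else 2, ?_, ?_, ?_⟩
  · intro x y h
    have e3 : (0 : ZMod 3) = 2 + 1 := by decide
    have e2 : (2 : ZMod 3) = 1 + 1 := by decide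
    have e1 : (1 : ZMod 3) = 0 + 1 := by decide
    have := harc' x y h
    have a1 := @d12 x
    have a2 := @d12 y
    have a3 := @d13 x
    have a4 := @d13 y
    have a5 := @d23 x
    have a6 := @d23 y
    rcases this with ⟨h1, h2⟩ | ⟨h1, h2⟩ | ⟨h1, h2⟩ <;> grind
  · intro y
    rcases hcov y with h | h | h
    · obtain ⟨x, -, hx⟩ := (p3 y h).1; exact ⟨x, hx⟩
    · obtain ⟨x, -, hx⟩ := (p1 y h).1; exact ⟨x, hx⟩
    · obtain ⟨x, -, hx⟩ := (p2 y h).1; exact ⟨x, hx⟩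
  · intro x x' y h h'
    have q := harc' x y h
    have q' := harc' x' y h'
    have a2 := @d12 y
    have a4 := @d13 y
    have a6 := @d23 y
    rcases hcov y with hy | hy | hy
    · exact (p3 y hy).2 x (by tauto) x' (by tauto) h h'
    · exact (p1 y hy).2 x (by tauto) x' (by tauto) h h'
    · exact (p2 y hy).2 x (by tauto) x' (by tauto) h h'

/-- If `k ≥ 3` is divisible by 3 and the finite digraph `D` belongs to `𝒟₂`,
then `D □ C_k^0` is an ECD digraph. -/
theorem cart_cycle_ecd_of_d2 {V : Type*} [Fintype V] (A : V → V → Prop)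
    (k : ℕ) (hk : 3 ≤ k) (hk3 : 3 ∣ k) (hD : InD2 A) :
    IsECDDigraph (cartArc A (cycArc k)) := by
  obtain ⟨c, hc, hex, huniq⟩ := d2_color A hD
  let f : ZMod k →+* ZMod 3 := ZMod.castHom hk3 (ZMod 3)
  have hf1 : ∀ i, f (i + 1) = f i + 1 := fun i => by rw [map_add, map_one]
  have key : ∀ a b : ZMod 3, a = b ∨ a = b + 1 ∨ a + 1 = b := by decide
  have n1 : ∀ a : ZMod 3, a ≠ a + 1 := by decide
  have n2 : ∀ a : ZMod 3, a ≠ a + 1 + 1 := by decide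
  refine ⟨{p | c p.1 = f p.2}, ?_, ?_⟩
  · rintro ⟨v, i⟩ hv ⟨w, j⟩ hw hne
    rw [Set.eq_empty_iff_forall_notMem]
    rintro ⟨u, l⟩ ⟨h1, h2⟩
    apply hne
    simp only [closedOut, cartArc, cycArc, Set.mem_union, Set.mem_singleton_iff,
      Set.mem_ofPred_eq, Prod.mk.injEq] at h1 h2 hv hw
    rcases h1 with ⟨h1, h0⟩ | ⟨h1, h0⟩ | ⟨h1, h0⟩ <;>
    rcases h2 with ⟨h2, h3⟩ | ⟨h2, h3⟩ | ⟨h2, h3⟩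
    all_goals
      try have t1 := hc _ _ h1
      try have t2 := hc _ _ h2
      try have t3 := huniq _ _ _ h1 h2
      have t4 := hf1 i
      have t5 := hf1 j
      have t6 := n1 (f i)
      have t7 := n2 (f i)
      have t8 := n1 (f j)
      have t9 := n2 (f j)
      grind
  · rw [Set.eq_univ_iff_forall]
    rintro ⟨u, l⟩
    simp only [Set.mem_iUnion]
    rcases key (c u) (f l) with h | h | h
    · exact ⟨(u, l), h, Or.inl rfl⟩
    · obtain ⟨x, hx⟩ := hex u
      refine ⟨(x, l), ?_, Or.inr (Or.inl ⟨hx, rfl⟩)⟩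
      have := hc x u hx
      exact add_right_cancel (this.symm.trans h)
    · refine ⟨(u, l - 1), ?_, Or.inr (Or.inr ⟨rfl, (sub_add_cancel l 1).symm⟩)⟩
      have := hf1 (l - 1)
      rw [sub_add_cancel, ← h] at this
      exact add_right_cancel this
end

section
/- Let k ≥ 6 be an integer divisible by 6 and let D be a finite digraph belonging to the family 𝒟₃. Then the Cartesian product D □ C_k^0 is an ECD digraph. -/
theorem within_elem {V : Type*} {A : V → V → Prop} {T S : Set V} (h : IsECDWithin A T S) :
    (∀ v ∈ S, ∀ w ∈ S, ∀ u ∈ T, (u = v ∨ A v u) → (u = w ∨ A w u) → v = w) ∧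
    (∀ u ∈ T, ∃ v ∈ S, u = v ∨ A v u) := by
  obtain ⟨_, h2, h3⟩ := h
  constructor
  · intro v hv w hw u hu h4 h5
    by_contra hne
    have h6 := h2 v hv w hw hne
    have : u ∈ (closedOut A v ∩ T) ∩ (closedOut A w ∩ T) := ⟨⟨h4, hu⟩, ⟨h5, hu⟩⟩
    rw [h6] at this
    exact this
  · intro u hu
    rw [← h3] at hu
    simp only [Set.mem_iUnion] at hu
    obtain ⟨v, hv, h4, _⟩ := hu
    exact ⟨v, hv, h4⟩

/-- Criterion for an ECD set in the product, given by a level predicate. -/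
theorem ecd_of_pred {V : Type*} (A : V → V → Prop) (k : ℕ) (P : V → ZMod k → Prop)
    (cov : ∀ u l, P u l ∨ P u (l - 1) ∨ ∃ v, P v l ∧ A v u)
    (hL : ∀ u l, P u l → P u (l - 1) → l - 1 = l)
    (hH : ∀ u v l, P v l → A v u → v ≠ u → ¬ P u l ∧ ¬ P u (l - 1))
    (hU : ∀ u v w l, P v l → P w l → A v u → A w u → v = w) :
    IsECDDigraph (cartArc A (cycArc k)) := by
  have key : ∀ (x u : V) (i l : ZMod k), (u, l) ∈ closedOut (cartArc A (cycArc k)) (x, i) →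
      (x = u ∧ i = l) ∨ (x = u ∧ i = l - 1) ∨ (x ≠ u ∧ A x u ∧ i = l) := by
    intro x u i l h
    by_cases hxu : x = u
    · rcases h with h | ⟨_, h⟩ | ⟨_, h⟩
      · left; simp only [Set.mem_singleton_iff, Prod.mk.injEq] at h
        exact ⟨hxu, h.2.symm⟩
      · left; exact ⟨hxu, h⟩
      · right; left; refine ⟨hxu, ?_⟩
        simp only [cycArc] at h
        rw [h]; ring
    · rcases h with h | ⟨h1, h⟩ | ⟨h1, _⟩
      · simp only [Set.mem_singleton_iff, Prod.mk.injEq] at h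
        exact absurd h.1.symm hxu
      · right; right; exact ⟨hxu, h1, h⟩
      · exact absurd h1 hxu
  refine ⟨{p | P p.1 p.2}, ?_, ?_⟩
  · rintro ⟨x, i⟩ hx ⟨y, j⟩ hy hne
    rw [Set.eq_empty_iff_forall_notMem]
    rintro ⟨u, l⟩ ⟨h1, h2⟩
    apply hne
    simp only [Set.mem_ofPred_eq] at hx hy
    rcases key _ _ _ _ h1 with ⟨rfl, rfl⟩ | ⟨rfl, rfl⟩ | ⟨a, b, rfl⟩ <;>
    rcases key _ _ _ _ h2 with ⟨rfl, rfl⟩ | ⟨rfl, rfl⟩ | ⟨c, d, rfl⟩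
    · rfl
    · rw [hL _ _ hx hy]
    · exact absurd hx (hH _ _ _ hy d c).1
    · rw [hL _ _ hy hx]
    · rfl
    · exact absurd hx (hH _ _ _ hy d c).2
    · exact absurd hy (hH _ _ _ hx b a).1
    · exact absurd hy (hH _ _ _ hx b a).2
    · rw [hU _ _ _ _ hx hy b d]
  · rw [Set.eq_univ_iff_forall]
    rintro ⟨u, l⟩
    simp only [Set.mem_iUnion]
    rcases cov u l with h | h | ⟨v, h, h1⟩
    · exact ⟨(u, l), h, Or.inl rfl⟩
    · exact ⟨(u, l - 1), h, Or.inr (Or.inr ⟨rfl, by simp [cycArc]⟩)⟩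
    · exact ⟨(v, l), h, Or.inr (Or.inl ⟨h1, rfl⟩)⟩

/-- If `k ≥ 6` is divisible by 6 and the finite digraph `D` belongs to `𝒟₃`,
then `D □ C_k^0` is an ECD digraph. -/
theorem cart_cycle_ecd_of_d3 {V : Type*} [Fintype V] (A : V → V → Prop)
    (k : ℕ) (hk : 6 ≤ k) (hk6 : 6 ∣ k) (hD : InD3 A) :
    IsECDDigraph (cartArc A (cycArc k)) := by
  obtain ⟨V1, V2, W, Z, V', hV, hdV, ⟨hT, hWZ, hWV, hZV, eW, eZ, hno⟩,
    ⟨U1, U2, U3, hU, d12, d13, d23, harc, e1, e2, e3⟩, hA, _⟩ := hD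
  have h2k : 2 ∣ k := dvd_trans (by norm_num) hk6
  have h3k : 3 ∣ k := dvd_trans (by norm_num) hk6
  let c2 : ZMod k → ZMod 2 := ZMod.castHom h2k (ZMod 2)
  let c3 : ZMod k → ZMod 3 := ZMod.castHom h3k (ZMod 3)
  have c2s : ∀ l, c2 (l - 1) = c2 l - 1 := by intro l; exact (map_sub (ZMod.castHom h2k (ZMod 2)) l 1).trans (by rw [map_one])
  have c3s : ∀ l, c3 (l - 1) = c3 l - 1 := by intro l; exact (map_sub (ZMod.castHom h3k (ZMod 3)) l 1).trans (by rw [map_one])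
  obtain ⟨uW, cW⟩ := within_elem eW
  obtain ⟨uZ, cZ⟩ := within_elem eZ
  obtain ⟨u1, c1⟩ := within_elem e1
  obtain ⟨u2, c2'⟩ := within_elem e2
  obtain ⟨u3, c3'⟩ := within_elem e3
  have hz2 : ∀ a : ZMod 2, (a = 0 ∧ a - 1 = 1) ∨ (a = 1 ∧ a - 1 = 0) := by decide
  have hz3 : ∀ a : ZMod 3, (a = 0 ∧ a - 1 = 2) ∨ (a = 1 ∧ a - 1 = 0) ∨ (a = 2 ∧ a - 1 = 1) := by
    decide
  have n2 : (0 : ZMod 2) ≠ 1 := by decide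
  have n01 : (0 : ZMod 3) ≠ 1 := by decide
  have n02 : (0 : ZMod 3) ≠ 2 := by decide
  have n12 : (1 : ZMod 3) ≠ 2 := by decide
  rw [Set.disjoint_left] at hdV hWZ hWV hZV d12 d13 d23
  have mT : ∀ x, x ∈ V1 ↔ x ∈ W ∨ x ∈ Z ∨ x ∈ V' := by
    intro x; rw [← hT]; simp [or_assoc]
  have mU : ∀ x, x ∈ V2 ↔ x ∈ U1 ∨ x ∈ U2 ∨ x ∈ U3 := by
    intro x; rw [← hU]; simp [or_assoc]
  have mV : ∀ x, x ∈ V1 ∨ x ∈ V2 := by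
    intro x
    have : x ∈ V1 ∪ V2 := by rw [hV]; trivial
    exact this
  simp only [Set.mem_union] at *
  clear eW eZ e1 e2 e3 hV hT hU
  -- targets of arcs from each class
  have aW : ∀ v ∈ W, ∀ u, A v u → v ≠ u → u ∈ V' := by
    intro v hv u h hne
    have := uW v hv u
    grind
  have aZ : ∀ v ∈ Z, ∀ u, A v u → v ≠ u → u ∈ V' := by
    intro v hv u h hne
    have := uZ v hv u
    grind
  have a1 : ∀ v ∈ U1, ∀ u, A v u → u ∈ U2 := by grind
  have a2 : ∀ v ∈ U2, ∀ u, A v u → u ∈ U3 := by grind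
  have a3 : ∀ v ∈ U3, ∀ u, A v u → u ∈ U1 := by grind
  refine ecd_of_pred A k (fun x i => (x ∈ W ∧ c2 i = 0) ∨ (x ∈ Z ∧ c2 i = 1) ∨
    (x ∈ U1 ∧ c3 i = 0) ∨ (x ∈ U2 ∧ c3 i = 1) ∨ (x ∈ U3 ∧ c3 i = 2)) ?_ ?_ ?_ ?_
  · intro u l
    simp only [c2s, c3s]
    have q2 := hz2 (c2 l)
    have q3 := hz3 (c3 l)
    have m : u ∈ W ∨ u ∈ Z ∨ u ∈ V' ∨ u ∈ U1 ∨ u ∈ U2 ∨ u ∈ U3 := by grind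
    rcases m with m | m | m | m | m | m
    · grind
    · grind
    · rcases q2 with q | q
      · obtain ⟨v, hv, h⟩ := cW u (Or.inr m)
        grind
      · obtain ⟨v, hv, h⟩ := cZ u (Or.inr m)
        grind
    · obtain ⟨v, hv, h⟩ := c3' u (Or.inr m)
      grind
    · obtain ⟨v, hv, h⟩ := c1 u (Or.inr m)
      grind
    · obtain ⟨v, hv, h⟩ := c2' u (Or.inr m)
      grind
  · intro u l
    simp only [c2s, c3s]
    have q2 := hz2 (c2 l)
    have q3 := hz3 (c3 l)
    grind
  · intro u v l
    simp only [c2s, c3s]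
    have q2 := hz2 (c2 l)
    have q3 := hz3 (c3 l)
    grind
  · intro u v w l
    intro hv hw h1 h2
    rcases hv with ⟨hv, q⟩ | ⟨hv, q⟩ | ⟨hv, q⟩ | ⟨hv, q⟩ | ⟨hv, q⟩
    · have t := uW v hv w
      have t1 := aW v hv u h1
      grind
    · have t := uZ v hv w
      have t1 := aZ v hv u h1
      grind
    · have t := u1 v hv w
      have t1 := a1 v hv u h1
      grind
    · have t := u2 v hv w
      have t1 := a2 v hv u h1
      grind
    · have t := u3 v hv w
      have t1 := a3 v hv u h1
      grind
end

section
/- Let F be a finite digraph and let t ≥ 1 be an integer. Let K_{1,t} denote the star digraph with a central vertex c and leaves u₁, …, u_t, whose arcs are exactly (c, u_i) for each i (so c is a source). Then the Cartesian product F □ K_{1,t} is an ECD digraph if and only if there exist sets Z ⊆ V(F) and W ⊆ V(F) ∖ Z such that Z is an ECD set of F, W is an ECD set of the subdigraph of F induced by V(F) ∖ Z, and no arc of F starts at a vertex of W and ends at a vertex of Z. -/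
/-- Arc relation of the star `K_{1,t}` on `Option (Fin t)`: the center `none` is a source
and the arcs are exactly `(none, some i)` for each leaf `i`. -/
def starArc (t : ℕ) : Option (Fin t) → Option (Fin t) → Prop :=
  fun p q => p = none ∧ q ≠ none

theorem isECD_iff_aux {V : Type*} (A : V → V → Prop) (S : Set V) :
    IsECD A S ↔ (∀ v ∈ S, ∀ w ∈ S, ∀ x, (x = v ∨ A v x) → (x = w ∨ A w x) → v = w) ∧
      ∀ x, ∃ v ∈ S, x = v ∨ A v x := by
  unfold IsECD closedOut
  simp only [Set.eq_univ_iff_forall, Set.eq_empty_iff_forall_notMem, Set.mem_iUnion,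
    Set.mem_inter_iff, Set.mem_union, Set.mem_singleton_iff, Set.mem_setOf_eq, exists_prop]
  grind

theorem isECDWithin_iff_aux {V : Type*} (A : V → V → Prop) (T S : Set V) :
    IsECDWithin A T S ↔ S ⊆ T ∧
      (∀ v ∈ S, ∀ w ∈ S, ∀ x ∈ T, (x = v ∨ A v x) → (x = w ∨ A w x) → v = w) ∧
      ∀ x ∈ T, ∃ v ∈ S, x = v ∨ A v x := by
  unfold IsECDWithin closedOut
  simp only [Set.ext_iff, Set.mem_empty_iff_false, iff_false, Set.mem_iUnion,
    Set.mem_inter_iff, Set.mem_union, Set.mem_singleton_iff, Set.mem_setOf_eq, exists_prop]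
  grind

/-- `F □ K_{1,t}` (central vertex a source) is an ECD digraph iff there are sets
`Z` and `W ⊆ V(F) ∖ Z` such that `Z` is an ECD set of `F`, `W` is an ECD set of the
subdigraph induced by `V(F) ∖ Z`, and no arc of `F` starts in `W` and ends in `Z`. -/
theorem cart_star_ecd_iff {V : Type*} [Fintype V] (B : V → V → Prop)
    (t : ℕ) (ht : 1 ≤ t) :
    IsECDDigraph (cartArc B (starArc t)) ↔
      ∃ Z W : Set V, W ⊆ Zᶜ ∧ IsECD B Z ∧ IsECDWithin B Zᶜ W ∧
        ∀ w ∈ W, ∀ z ∈ Z, ¬ B w z := by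
  simp only [IsECDDigraph, isECD_iff_aux, isECDWithin_iff_aux]
  constructor
  · rintro ⟨S, h1, h2⟩
    let o : Option (Fin t) := some ⟨0, ht⟩
    have ho : o ≠ none := by simp [o]
    -- a vertex of `S` in layer `none` and one in layer `o` never dominate a common vertex
    have key : ∀ z v x, (z, none) ∈ S → (v, o) ∈ S → x = z → (x = v ∨ B v x) → False := by
      intro z v x hz hv hx hd
      have := h1 (z, none) hz (v, o) hv (x, o) (Or.inr (Or.inr ⟨hx.symm, rfl, ho⟩))
        (by rcases hd with rfl | hd
            · exact Or.inl rfl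
            · exact Or.inr (Or.inl ⟨hd, rfl⟩))
      exact ho (congrArg Prod.snd this).symm
    have lay : ∀ l : Option (Fin t), ∀ v w x, (v, l) ∈ S → (w, l) ∈ S →
        (x = v ∨ B v x) → (x = w ∨ B w x) → v = w := by
      intro l v w x hv hw a b
      have := h1 (v, l) hv (w, l) hw (x, l)
        (by rcases a with rfl | a
            · exact Or.inl rfl
            · exact Or.inr (Or.inl ⟨a, rfl⟩))
        (by rcases b with rfl | b
            · exact Or.inl rfl
            · exact Or.inr (Or.inl ⟨b, rfl⟩))
      exact congrArg Prod.fst this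
    have sub : {v | (v, o) ∈ S} ⊆ {v | (v, none) ∈ S}ᶜ :=
      fun v hv hz => key v v v hz hv rfl (Or.inl rfl)
    refine ⟨{v | (v, none) ∈ S}, {v | (v, o) ∈ S}, sub, ⟨?_, ?_⟩, ⟨sub, ?_, ?_⟩, ?_⟩
    · intro v hv w hw x
      exact lay none v w x hv hw
    · intro x
      obtain ⟨⟨v, l⟩, hv, h⟩ := h2 (x, none)
      rcases h with h | ⟨h, h'⟩ | ⟨_, _, h⟩
      · obtain ⟨rfl, rfl⟩ := Prod.mk.inj h
        exact ⟨x, hv, Or.inl rfl⟩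
      · simp only at h h'
        subst h'
        exact ⟨v, hv, Or.inr h⟩
      · exact absurd rfl h
    · intro v hv w hw x _
      exact lay o v w x hv hw
    · intro x hx
      obtain ⟨⟨v, l⟩, hv, h⟩ := h2 (x, o)
      rcases h with h | ⟨h, h'⟩ | ⟨h, h', _⟩
      · obtain ⟨rfl, rfl⟩ := Prod.mk.inj h
        exact ⟨x, hv, Or.inl rfl⟩
      · simp only at h h'
        subst h'
        exact ⟨v, hv, Or.inr h⟩
      · simp only at h h'
        subst h h'
        exact absurd hv hx
    · intro w hw z hz hb
      exact key z w z hz hw rfl (Or.inr hb)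
  · rintro ⟨Z, W, hWZ, ⟨hZ1, hZ2⟩, ⟨-, hW1, hW2⟩, hno⟩
    have hWZ' : ∀ w ∈ W, w ∉ Z := hWZ
    simp only [Set.mem_compl_iff] at hW1 hW2
    refine ⟨{p | (p.2 = none ∧ p.1 ∈ Z) ∨ (p.2 ≠ none ∧ p.1 ∈ W)}, ?_, ?_⟩
    · rintro ⟨v, l⟩ hv ⟨w, m⟩ hw ⟨x, k⟩ a b
      simp only [cartArc, starArc, Prod.mk.injEq, Set.mem_setOf_eq] at *
      grind
    · rintro ⟨x, k⟩
      by_cases hk : k = none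
      · obtain ⟨v, hv, h⟩ := hZ2 x
        refine ⟨(v, k), Or.inl ⟨hk, hv⟩, ?_⟩
        simp only [cartArc, starArc, Prod.mk.injEq]
        tauto
      · by_cases hx : x ∈ Z
        · exact ⟨(x, none), Or.inl ⟨rfl, hx⟩, Or.inr (Or.inr ⟨rfl, rfl, hk⟩)⟩
        · obtain ⟨v, hv, h⟩ := hW2 x hx
          refine ⟨(v, k), Or.inr ⟨hk, hv⟩, ?_⟩
          simp only [cartArc, starArc, Prod.mk.injEq]
          tauto
end

section
/- Let t ≥ 1 and let k₁, …, k_t be integers with each k_i ≥ 2. The direct product C_{k₁}^0 × ⋯ × C_{k_t}^0, i.e., the digraph on the product of the cyclic groups ZMod k₁ × ⋯ × ZMod k_t with an arc from x to y if and only if y_i = x_i + 1 for every i, is an ECD digraph if and only if at least one of the numbers k₁, …, k_t is even. -/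
/-- The direct product `C_{k₁}^0 × ⋯ × C_{k_t}^0` of directed cycles (each `k_i ≥ 2`)
is an ECD digraph iff at least one of the `k_i` is even. -/
theorem dirprod_cycles_ecd_iff (t : ℕ) (ht : 1 ≤ t) (k : Fin t → ℕ)
    (hk : ∀ i, 2 ≤ k i) :
    IsECDDigraph (fun (x y : ∀ i, ZMod (k i)) => ∀ i, y i = x i + 1) ↔
      ∃ i, Even (k i) := by
  constructor
  · rintro ⟨S, hd, hc⟩
    by_contra hodd
    push Not at hodd
    have step : ∀ v : (∀ i, ZMod (k i)), v + 1 ∈ S ↔ v ∉ S := by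
      intro v
      constructor
      · intro h1 h0
        have hne : v ≠ v + 1 := by
          intro h
          have h2 := congrFun h ⟨0, ht⟩
          haveI : Fact (1 < k ⟨0, ht⟩) := ⟨hk _⟩
          simp at h2
        have h3 := hd v h0 (v + 1) h1 hne
        have h4 : v + 1 ∈ (∅ : Set (∀ i, ZMod (k i))) := by
          rw [← h3]
          exact ⟨Or.inr fun i => rfl, Or.inl rfl⟩
        exact h4
      · intro h0
        have h1 : v + 1 ∈ (Set.univ : Set (∀ i, ZMod (k i))) := trivial
        rw [← hc] at h1
        simp only [Set.mem_iUnion] at h1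
        obtain ⟨w, hw, h2 | h2⟩ := h1
        · have h5 : v + 1 = w := h2
          rw [h5]; exact hw
        · exfalso
          apply h0
          have h5 : v = w := by
            funext i
            have h6 := h2 i
            simpa using h6
          rw [h5]; exact hw
    have par : ∀ n : ℕ, ((n : ∀ i, ZMod (k i)) ∈ S) ↔
        ((0 : ∀ i, ZMod (k i)) ∈ S ↔ Even n) := by
      intro n
      induction n with
      | zero => simp
      | succ n ih =>
        rw [Nat.cast_succ, step, ih, Nat.even_add_one]
        tauto
    have hN : Odd (∏ i, k i) := by
      apply Finset.prod_induction k Odd (fun a b ha hb => ha.mul hb) odd_one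
      intro i _
      exact Nat.not_even_iff_odd.mp (hodd i)
    have h0 : ((∏ i, k i : ℕ) : ∀ i, ZMod (k i)) = 0 := by
      funext i
      rw [Pi.natCast_apply, Pi.zero_apply, ZMod.natCast_eq_zero_iff]
      exact Finset.dvd_prod_of_mem k (Finset.mem_univ i)
    have h1 := par (∏ i, k i)
    rw [h0] at h1
    have h2 := Nat.not_even_iff_odd.mpr hN
    tauto
  · rintro ⟨i, hi⟩
    let f : ZMod (k i) →+* ZMod 2 := ZMod.castHom hi.two_dvd (ZMod 2)
    have key : ∀ a : ZMod 2, a = 0 → a + 1 = 0 → False := by decide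
    have key2 : ∀ a : ZMod 2, a ≠ 0 → a - 1 = 0 := by decide
    refine ⟨{x | f (x i) = 0}, ?_, ?_⟩
    · intro v hv w hw hne
      rw [Set.eq_empty_iff_forall_notMem]
      rintro u ⟨hu1, hu2⟩
      have hv' : f (v i) = 0 := hv
      have hw' : f (w i) = 0 := hw
      rcases hu1 with hu1 | hu1 <;> rcases hu2 with hu2 | hu2
      · exact hne (hu1.symm.trans hu2)
      · have e : u = v := hu1
        have h := hu2 i
        rw [e] at h
        rw [h, map_add, map_one] at hv'
        exact key _ hw' hv'
      · have e : u = w := hu2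
        have h := hu1 i
        rw [e] at h
        rw [h, map_add, map_one] at hw'
        exact key _ hv' hw'
      · apply hne
        funext j
        have h := (hu1 j).symm.trans (hu2 j)
        exact add_right_cancel h
    · rw [Set.eq_univ_iff_forall]
      intro u
      simp only [Set.mem_iUnion]
      by_cases h : f (u i) = 0
      · exact ⟨u, h, Or.inl rfl⟩
      · refine ⟨u - 1, ?_, Or.inr ?_⟩
        · show f ((u - 1) i) = 0
          rw [Pi.sub_apply, Pi.one_apply, map_sub, map_one]
          exact key2 _ h
        · intro j
          simp
end

section
/- Let t ≥ 1 and, for each i ∈ {1, …, t}, let D_i be an oriented cycle on ZMod k_i with k_i ≥ 3. The direct product D₁ × ⋯ × D_t is an ECD digraph if and only if at most one of the digraphs D₁, …, D_t has a source, and moreover: (i) if no D_i has a source, then at least one of the numbers k₁, …, k_t is even; (ii) if D_{i₀} is the unique factor having a source, then every sink of D_{i₀} has a neighboring source at even distance. -/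
/-- A sink: a vertex of out-degree 0. -/
def IsSink {V : Type*} (A : V → V → Prop) (s : V) : Prop := ∀ y, ¬ A s y

/-- A source: a vertex of in-degree 0. -/
def IsSource {V : Type*} (A : V → V → Prop) (s : V) : Prop := ∀ x, ¬ A x s

/-- An oriented cycle on `ZMod k`: for each `i`, exactly one of the arcs `(i, i+1)` and
`(i+1, i)` is present, and there are no other arcs. -/
def IsOrientedCycle {k : ℕ} (A : ZMod k → ZMod k → Prop) : Prop :=
  (∀ x y, A x y → y = x + 1 ∨ x = y + 1) ∧
  (∀ i : ZMod k, Xor' (A i (i + 1)) (A (i + 1) i))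

/-- The sink `s` has a neighboring source at even distance: there is a directed path of
even length `n ≥ 2` from a source to `s` whose inner vertices are not sinks. -/
def HasNearSourceEvenDist {k : ℕ} (A : ZMod k → ZMod k → Prop) (s : ZMod k) : Prop :=
  ∃ n : ℕ, Even n ∧ 2 ≤ n ∧ ∃ x : ℕ → ZMod k,
    IsSource A (x 0) ∧ x n = s ∧ (∀ j, j < n → A (x j) (x (j + 1))) ∧
    (∀ j, 0 < j → j < n → ¬ IsSink A (x j))

theorem ocy_ecd_iff {V : Type*} (A : V → V → Prop) (S : Set V) :
    IsECD A S ↔ ∀ u, ∃! v, v ∈ S ∧ (v = u ∨ A v u) := by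
  unfold IsECD
  constructor
  · rintro ⟨h1, h2⟩ u
    have hu : u ∈ (⋃ v ∈ S, closedOut A v) := by rw [h2]; trivial
    simp only [Set.mem_iUnion] at hu
    obtain ⟨v, hv, huv⟩ := hu
    refine ⟨v, ⟨hv, ?_⟩, ?_⟩
    · rcases huv with h | h
      · left; exact h.symm
      · right; exact h
    · rintro w ⟨hw, hwu⟩
      by_contra hne
      have h := h1 w hw v hv hne
      have : u ∈ closedOut A w ∩ closedOut A v := by
        refine ⟨?_, huv⟩
        rcases hwu with h | h
        · left; exact h.symm
        · right; exact h
      rw [h] at this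
      exact this
  · intro h
    constructor
    · intro v hv w hw hne
      ext u
      simp only [Set.mem_inter_iff, Set.mem_empty_iff_false, iff_false]
      rintro ⟨h1, h2⟩
      apply hne
      refine (h u).unique ⟨hv, ?_⟩ ⟨hw, ?_⟩
      · rcases h1 with h | h
        · left; exact h.symm
        · right; exact h
      · rcases h2 with h | h
        · left; exact h.symm
        · right; exact h
    · ext u
      simp only [Set.mem_iUnion, Set.mem_univ, iff_true]
      obtain ⟨v, ⟨hv, hvu⟩, -⟩ := h u
      refine ⟨v, hv, ?_⟩
      rcases hvu with h | h
      · left; exact h.symm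
      · right; exact h

theorem ocy_unique_pred {V : Type*} {A : V → V → Prop} {S : Set V}
    (h : ∀ u, ∃! v, v ∈ S ∧ (v = u ∨ A v u)) {p y : V} (hne : p ≠ y) (hp : A p y)
    (hu : ∀ q, A q y → q = p) : y ∈ S ↔ p ∉ S := by
  constructor
  · intro hy hpS
    exact hne ((h y).unique ⟨hpS, Or.inr hp⟩ ⟨hy, Or.inl rfl⟩)
  · intro hpS
    obtain ⟨v, ⟨hv, h1 | h1⟩, -⟩ := h y
    · exact h1 ▸ hv
    · exact absurd (hu v h1 ▸ hv) hpS

theorem ocy_asymm {k : ℕ} {A : ZMod k → ZMod k → Prop} (hA : IsOrientedCycle A)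
    {x y : ZMod k} (h : A x y) : ¬ A y x := by
  intro h'
  rcases hA.1 x y h with rfl | rfl
  · rcases hA.2 x with ⟨_, h2⟩ | ⟨_, h2⟩
    · exact h2 h'
    · exact h2 h
  · rcases hA.2 y with ⟨_, h2⟩ | ⟨_, h2⟩
    · exact h2 h
    · exact h2 h'

theorem ocy_total {k : ℕ} {A : ZMod k → ZMod k → Prop} (hA : IsOrientedCycle A)
    (x : ZMod k) : A x (x + 1) ∨ A (x + 1) x := by
  rcases hA.2 x with ⟨h, _⟩ | ⟨h, _⟩
  · exact Or.inl h
  · exact Or.inr h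

theorem ocy_ne {k : ℕ} {A : ZMod k → ZMod k → Prop} (hA : IsOrientedCycle A)
    {x y : ZMod k} (h : A x y) : x ≠ y := by
  rintro rfl
  exact ocy_asymm hA h h

theorem ocy_two_ne {k : ℕ} (hk : 3 ≤ k) (s : ZMod k) : s + 1 ≠ s - 1 := by
  intro h
  have h2 : ((2 : ℕ) : ZMod k) = 0 := by
    push_cast
    linear_combination h
  rw [ZMod.natCast_eq_zero_iff] at h2
  have := Nat.le_of_dvd (by norm_num) h2
  omega

theorem ocy_sink_in {k : ℕ} {A : ZMod k → ZMod k → Prop} (hA : IsOrientedCycle A)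
    {s : ZMod k} (hs : IsSink A s) : A (s + 1) s ∧ A (s - 1) s := by
  constructor
  · exact (ocy_total hA s).resolve_left (hs _)
  · have := ocy_total hA (s - 1)
    rw [sub_add_cancel] at this
    exact this.resolve_right (hs _)

theorem ocy_in_uniq {k : ℕ} {A : ZMod k → ZMod k → Prop} (hA : IsOrientedCycle A)
    {p q y r : ZMod k} (hp : A p y) (hq : A q y) (hr : A y r) : q = p := by
  have hpr : p ≠ r := by
    rintro rfl
    exact ocy_asymm hA hp hr
  have hqr : q ≠ r := by
    rintro rfl
    exact ocy_asymm hA hq hr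
  rcases hA.1 _ _ hp with h1 | h1 <;> rcases hA.1 _ _ hq with h2 | h2 <;>
    rcases hA.1 _ _ hr with h3 | h3 <;> grind

theorem ocy_add_nat {k : ℕ} (hk : 3 ≤ k) (a y : ZMod k) : ∃ m : ℕ, y = a + m := by
  have : NeZero k := ⟨by omega⟩
  exact ⟨(y - a).val, by simp⟩

theorem ocy_exists_sink {k : ℕ} (hk : 3 ≤ k) {A : ZMod k → ZMod k → Prop}
    (hA : IsOrientedCycle A) (h : ∃ a, IsSource A a) : ∃ s, IsSink A s := by
  obtain ⟨a, ha⟩ := h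
  by_contra hs
  unfold IsSink at hs
  push Not at hs
  have key : ∀ m : ℕ, A (a + m) (a + m + 1) := by
    intro m
    induction m with
    | zero =>
      have := (ocy_total hA a).resolve_right (ha _)
      simpa using this
    | succ m ih =>
      obtain ⟨y, hy⟩ := hs (a + m + 1)
      push_cast
      rw [← add_assoc]
      rcases hA.1 _ _ hy with h | h
      · rw [← h]; exact hy
      · have : y = a + m := by linear_combination -h
        subst this
        exact absurd hy (ocy_asymm hA ih)
  obtain ⟨m, hm⟩ := ocy_add_nat hk a (a - 1)
  have := key m
  rw [← hm, sub_add_cancel] at this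
  exact ha _ this

theorem ocy_dir {k : ℕ} (hk : 3 ≤ k) {A : ZMod k → ZMod k → Prop}
    (hA : IsOrientedCycle A) (h : ¬ ∃ a, IsSource A a) :
    ∃ e : ZMod k, (e = 1 ∨ e = -1) ∧ ∀ x y, A x y ↔ y = x + e := by
  unfold IsSource at h
  push Not at h
  by_cases hc : ∀ i, A i (i + 1)
  · refine ⟨1, Or.inl rfl, fun x y => ⟨fun hxy => ?_, ?_⟩⟩
    · rcases hA.1 _ _ hxy with h | h
      · exact h
      · subst h
        exact absurd hxy (ocy_asymm hA (hc y))
    · rintro rfl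
      exact hc x
  · push Not at hc
    obtain ⟨i, hi⟩ := hc
    have key : ∀ m : ℕ, A (i + m + 1) (i + m) := by
      intro m
      induction m with
      | zero =>
        have := (ocy_total hA i).resolve_left hi
        simpa using this
      | succ m ih =>
        obtain ⟨y, hy⟩ := h (i + m + 1)
        push_cast
        rw [← add_assoc]
        rcases hA.1 _ _ hy with h | h
        · have : y = i + m := by linear_combination -h
          subst this
          exact absurd hy (ocy_asymm hA ih)
        · rw [← h]; exact hy
    have key' : ∀ x, A (x + 1) x := by
      intro x
      obtain ⟨m, rfl⟩ := ocy_add_nat hk i x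
      exact key m
    refine ⟨-1, Or.inr rfl, fun x y => ⟨fun hxy => ?_, ?_⟩⟩
    · rcases hA.1 _ _ hxy with h | h
      · subst h
        exact absurd hxy (ocy_asymm hA (key' x))
      · linear_combination -h
    · rintro rfl
      have := key' (x + -1)
      simpa using this

/-- Tracing back from an arc to a source. -/
theorem ocy_back {k : ℕ} (hk : 3 ≤ k) {A : ZMod k → ZMod k → Prop}
    (hA : IsOrientedCycle A) (h : ∃ a, IsSource A a) {p y : ZMod k} (hp : A p y) :
    ∃ (n : ℕ) (x : ℕ → ZMod k), IsSource A (x 0) ∧ (∀ j, j < n + 1 → A (x j) (x (j + 1))) ∧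
      x n = p ∧ x (n + 1) = y := by
  classical
  obtain ⟨a, ha⟩ := h
  obtain ⟨e, he, rfl⟩ : ∃ e : ZMod k, (e = 1 ∨ e = -1) ∧ p = y + e := by
    rcases hA.1 _ _ hp with h | h
    · exact ⟨-1, Or.inr rfl, by rw [h]; ring⟩
    · exact ⟨1, Or.inl rfl, h⟩
  have hee : e * e = 1 := by rcases he with rfl | rfl <;> ring
  have hex : ∃ n : ℕ, IsSource A (y + (n + 1) * e) := by
    obtain ⟨m, hm⟩ := ocy_add_nat hk 0 ((a - y - e) * e)
    refine ⟨m, ?_⟩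
    have : y + (m + 1) * e = a := by
      linear_combination (a - y - e) * hee - e * hm
    rw [this]; exact ha
  have hmin := fun m => @Nat.find_min _ _ hex m
  have hsp := Nat.find_spec hex
  generalize Nat.find hex = n at hmin hsp
  have key : ∀ j : ℕ, j ≤ n → A (y + (j + 1) * e) (y + j * e) := by
    intro j
    induction j with
    | zero => intro _; simpa using hp
    | succ j ih =>
      intro hj
      have h1 := hmin (m := j) (by omega)
      have h2 := ih (by omega)
      unfold IsSource at h1
      push Not at h1
      obtain ⟨q, hq⟩ := h1
      have hq' : q = y + (j + 1) * e + e ∨ q = y + j * e := by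
        rcases hA.1 _ _ hq with h | h <;> rcases he with rfl | rfl
        · right; linear_combination -h
        · left; linear_combination -h
        · left; linear_combination h
        · right; linear_combination h
      rcases hq' with rfl | rfl
      · push_cast
        have e1 : y + ((j : ZMod k) + 1 + 1) * e = y + (j + 1) * e + e := by ring
        rw [e1]; exact hq
      · exact absurd hq (ocy_asymm hA h2)
  refine ⟨n, fun j => y + ((n + 1 - j : ℕ) : ZMod k) * e, ?_, ?_, ?_, ?_⟩
  · simpa using hsp
  · intro j hj
    have := key (n - j) (by omega)
    have e1 : n + 1 - j = (n - j) + 1 := by omega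
    have e2 : n + 1 - (j + 1) = n - j := by omega
    simp only [e1, e2]
    push_cast
    exact this
  · simp
  · simp

theorem ocy_wf {k : ℕ} (hk : 3 ≤ k) {A : ZMod k → ZMod k → Prop}
    (hA : IsOrientedCycle A) (h : ∃ a, IsSource A a) : WellFounded A := by
  constructor
  intro y
  constructor
  intro p hp
  obtain ⟨n, x, h0, harc, hn, -⟩ := ocy_back hk hA h hp
  have key : ∀ j, j ≤ n → Acc A (x j) := by
    intro j
    induction j with
    | zero => exact fun _ => ⟨_, fun q hq => absurd hq (h0 q)⟩
    | succ j ih =>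
      intro hj
      refine ⟨_, fun q hq => ?_⟩
      rw [ocy_in_uniq hA (harc j (by omega)) hq (harc (j + 1) (by omega))]
      exact ih (by omega)
  exact hn ▸ key n le_rfl

/-- In a well-founded digraph there is a set containing exactly the vertices having no
in-neighbour in it. -/
theorem ocy_kernel {V : Type*} {A : V → V → Prop} (h : WellFounded A) :
    ∃ T : Set V, ∀ y, y ∈ T ↔ ∀ p, A p y → p ∉ T := by
  refine ⟨{y | h.fix (C := fun _ => Prop) (fun y ih => ∀ p (hp : A p y), ¬ ih p hp) y}, ?_⟩
  intro y
  simp only [Set.mem_ofPred_eq]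
  rw [h.fix_eq]

theorem ocy_single {k : ℕ} (hk : 3 ≤ k) {A : ZMod k → ZMod k → Prop}
    (hA : IsOrientedCycle A) (h : ∃ a, IsSource A a)
    (hs : ∀ s, IsSink A s → HasNearSourceEvenDist A s) :
    ∃ T : Set (ZMod k), ∀ u, ∃! v, v ∈ T ∧ (v = u ∨ A v u) := by
  obtain ⟨T, hT⟩ := ocy_kernel (ocy_wf hk hA h)
  refine ⟨T, fun u => ?_⟩
  by_cases hu : u ∈ T
  · refine ⟨u, ⟨hu, Or.inl rfl⟩, ?_⟩
    rintro w ⟨hw, h1 | h1⟩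
    · exact h1
    · exact absurd hw ((hT u).1 hu w h1)
  · have hu' := hu
    rw [hT] at hu'
    push Not at hu'
    obtain ⟨p, hp, hpT⟩ := hu'
    refine ⟨p, ⟨hpT, Or.inr hp⟩, ?_⟩
    rintro w ⟨hw, h1 | h1⟩
    · subst h1; exact absurd hw hu
    by_cases hsk : IsSink A u
    · obtain ⟨n, hev, hn2, x, h0, hxn, harc, -⟩ := hs u hsk
      have key : ∀ j, j < n → (x j ∈ T ↔ Even j) := by
        intro j
        induction j with
        | zero => exact fun _ => by simpa using (hT _).2 fun q hq => absurd hq (h0 q)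
        | succ j ih =>
          intro hj
          rw [hT, Nat.even_add_one, ← ih (by omega)]
          constructor
          · intro H; exact H _ (harc j (by omega))
          · intro H q hq
            rw [ocy_in_uniq hA (harc j (by omega)) hq (harc (j + 1) (by omega))]
            exact H
      obtain ⟨m, rfl⟩ : ∃ m, n = m + 1 := ⟨n - 1, by omega⟩
      have hm : x m ∉ T := by
        rw [key m (by omega)]
        exact Nat.even_add_one.1 hev
      have ha := harc m (by omega)
      rw [hxn] at ha
      have hwm : w ≠ x m := fun hh => hm (hh ▸ hw)
      have hpm : p ≠ x m := fun hh => hm (hh ▸ hpT)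
      rcases hA.1 _ _ hp with h4 | h4 <;> rcases hA.1 _ _ h1 with h2 | h2 <;>
        rcases hA.1 _ _ ha with h3 | h3 <;> grind
    · unfold IsSink at hsk
      push Not at hsk
      obtain ⟨r, hr⟩ := hsk
      exact ocy_in_uniq hA hp h1 hr

theorem dirprod_oriented_cycles_ecd_iff (t : ℕ) (ht : 1 ≤ t) (k : Fin t → ℕ)
    (hk : ∀ i, 3 ≤ k i) (A : ∀ i, ZMod (k i) → ZMod (k i) → Prop)
    (hA : ∀ i, IsOrientedCycle (A i)) :
    IsECDDigraph (fun (x y : ∀ i, ZMod (k i)) => ∀ i, A i (x i) (y i)) ↔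
      ((∀ i j, (∃ s, IsSource (A i) s) → (∃ s, IsSource (A j) s) → i = j) ∧
       ((∀ i, ¬ ∃ s, IsSource (A i) s) → ∃ i, Even (k i)) ∧
       (∀ i, (∃ s, IsSource (A i) s) →
          ∀ s, IsSink (A i) s → HasNearSourceEvenDist (A i) s)) := by
  classical
  unfold IsECDDigraph
  simp only [ocy_ecd_iff]
  have i0 : Fin t := ⟨0, by omega⟩
  constructor
  · rintro ⟨S, hS⟩
    have hsrc : ∀ (i : Fin t) (x : ∀ i, ZMod (k i)), IsSource (A i) (x i) → x ∈ S := by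
      intro i x hx
      obtain ⟨v, ⟨hv, h1 | h1⟩, -⟩ := hS x
      · exact h1 ▸ hv
      · exact absurd (h1 i) (hx _)
    have hfirst : ∀ i j, (∃ s, IsSource (A i) s) → (∃ s, IsSource (A j) s) → i = j := by
      intro i j hi hj
      by_contra hne
      obtain ⟨s, hs⟩ := ocy_exists_sink (hk j) (hA j) hj
      obtain ⟨a, ha⟩ := hi
      obtain ⟨hs1, hs2⟩ := ocy_sink_in (hA j) hs
      have hz : ∀ l, ∃ z : ZMod (k l) × ZMod (k l), A l z.1 z.2 := by
        intro l
        rcases ocy_total (hA l) 0 with h | h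
        · exact ⟨(_, _), h⟩
        · exact ⟨(_, _), h⟩
      choose z hz using hz
      have ha1 := (ocy_total (hA i) a).resolve_right (ha _)
      let y : ∀ l, ZMod (k l) :=
        Function.update (Function.update (fun l => (z l).2) i (a + 1)) j s
      let w : ZMod (k j) → ∀ l, ZMod (k l) := fun c =>
        Function.update (Function.update (fun l => (z l).1) i a) j c
      have hwS : ∀ c, w c ∈ S := by
        intro c
        apply hsrc i
        simpa [w, hne] using ha
      have hwA : ∀ c, A j c s → ∀ l, A l (w c l) (y l) := by
        intro c hc l
        by_cases hl : l = j
        · subst hl; simpa [w, y] using hc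
        · by_cases hl2 : l = i
          · subst hl2; simpa [w, y, hl] using ha1
          · simpa [w, y, hl, hl2] using hz l
      have := (hS y).unique ⟨hwS _, Or.inr (hwA _ hs1)⟩ ⟨hwS _, Or.inr (hwA _ hs2)⟩
      have := congrFun this j
      simp only [w, Function.update_self] at this
      exact ocy_two_ne (hk j) s this
    refine ⟨hfirst, ?_, ?_⟩
    · intro hno
      choose e he hAe using fun l => ocy_dir (hk l) (hA l) (hno l)
      by_contra hodd
      push Not at hodd
      have hstep : ∀ x : ∀ l, ZMod (k l), (x + e ∈ S ↔ x ∉ S) := by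
        intro x
        have harc : ∀ l, A l (x l) ((x + e) l) := fun l => (hAe l _ _).2 rfl
        refine ocy_unique_pred hS ?_ harc ?_
        · intro h
          exact ocy_ne (hA i0) (harc i0) (congrFun h i0)
        · intro q hq
          funext l
          have := (hAe l _ _).1 (hq l)
          simp only [Pi.add_apply] at this
          exact (add_right_cancel this).symm
      have hm : ∀ m : ℕ, ((m • e : ∀ l, ZMod (k l)) ∈ S ↔ ((0 : ∀ l, ZMod (k l)) ∈ S ↔ Even m)) := by
        intro m
        induction m with
        | zero => simp
        | succ m ih =>
          rw [succ_nsmul, hstep, ih, Nat.even_add_one]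
          tauto
      have hK := hm (∏ l, k l)
      have hzero : ((∏ l, k l) • e : ∀ l, ZMod (k l)) = 0 := by
        funext l
        have : ((∏ l, k l : ℕ) : ZMod (k l)) = 0 := by
          rw [ZMod.natCast_eq_zero_iff]
          exact Finset.dvd_prod_of_mem _ (Finset.mem_univ l)
        simp only [Pi.smul_apply, nsmul_eq_mul, this, zero_mul, Pi.zero_apply]
      have hKodd : ¬ Even (∏ l, k l) := by
        rw [Nat.even_iff, ← Nat.dvd_iff_mod_eq_zero, Nat.prime_two.prime.dvd_finset_prod_iff]
        rintro ⟨l, -, hl⟩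
        exact hodd l (even_iff_two_dvd.2 hl)
      rw [hzero] at hK
      tauto
    · intro i hi s hs
      by_contra hnear
      have hno : ∀ l, l ≠ i → ¬ ∃ a, IsSource (A l) a := fun l hl h => hl (hfirst l i h hi)
      have hdir : ∀ l, ∃ e : ZMod (k l), l ≠ i → ∀ x y, A l x y ↔ y = x + e := by
        intro l
        by_cases hl : l = i
        · exact ⟨0, fun h => absurd hl h⟩
        · obtain ⟨e, -, he⟩ := ocy_dir (hk l) (hA l) (hno l hl)
          exact ⟨e, fun _ => he⟩
      choose e he using hdir
      have main : ∀ p, A i p s → ∀ x : ∀ l, ZMod (k l), x i = p → x ∈ S := by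
        intro p hp
        obtain ⟨n, c, h0, harc, hn, hn1⟩ := ocy_back (hk i) (hA i) hi hp
        have hev : Even n := by
          by_contra hodd
          apply hnear
          refine ⟨n + 1, Nat.even_add_one.2 hodd, ?_, c, h0, hn1, harc, ?_⟩
          · rcases n with _ | n
            · simp at hodd
            · omega
          · intro j _ hj hsj
            exact hsj _ (harc j hj)
        have key : ∀ j, j ≤ n → ∀ x : ∀ l, ZMod (k l), x i = c j → (x ∈ S ↔ Even j) := by
          intro j
          induction j with
          | zero =>
            intro _ x hx
            simpa using hsrc i x (hx ▸ h0)
          | succ j ih =>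
            intro hj x hx
            let w : ∀ l, ZMod (k l) := Function.update (x - e) i (c j)
            have hwi : w i = c j := by simp [w]
            have hwl : ∀ l, l ≠ i → w l = x l - e l := by
              intro l hl
              simp [w, hl]
            rw [Nat.even_add_one, ← ih (by omega) w hwi]
            refine ocy_unique_pred hS ?_ ?_ ?_
            · intro h
              apply ocy_ne (hA i) (harc j (by omega))
              rw [← hwi, h, hx]
            · intro l
              by_cases hl : l = i
              · subst hl
                rw [hwi, hx]; exact harc j (by omega)
              · rw [he l hl, hwl l hl]; ring
            · intro q hq
              funext l
              by_cases hl : l = i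
              · subst hl
                rw [hwi]
                have := hq l
                rw [hx] at this
                exact ocy_in_uniq (hA l) (harc j (by omega)) this (harc (j + 1) (by omega))
              · rw [hwl l hl, (he l hl _ _).1 (hq l)]; ring
        intro x hx
        exact (key n le_rfl x (hx.trans hn.symm)).2 hev
      obtain ⟨hs1, hs2⟩ := ocy_sink_in (hA i) hs
      let y : ∀ l, ZMod (k l) := Function.update e i s
      let w : ZMod (k i) → ∀ l, ZMod (k l) := fun c => Function.update 0 i c
      have hwA : ∀ c, A i c s → ∀ l, A l (w c l) (y l) := by
        intro c hc l
        by_cases hl : l = i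
        · subst hl; simpa [w, y] using hc
        · rw [he l hl]; simp [w, y, hl]
      have := (hS y).unique ⟨main _ hs1 (w _) (by simp [w]), Or.inr (hwA _ hs1)⟩
        ⟨main _ hs2 (w _) (by simp [w]), Or.inr (hwA _ hs2)⟩
      have := congrFun this i
      simp only [w, Function.update_self] at this
      exact ocy_two_ne (hk i) s this
  · rintro ⟨hfirst, hsecond, hthird⟩
    by_cases hno : ∀ i, ¬ ∃ s, IsSource (A i) s
    · obtain ⟨i, hi⟩ := hsecond hno
      choose e he hAe using fun l => ocy_dir (hk l) (hA l) (hno l)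
      let f : ZMod (k i) →+* ZMod 2 := ZMod.castHom (even_iff_two_dvd.1 hi) (ZMod 2)
      have hfe : f (e i) = 1 := by
        rcases he i with h | h
        · rw [h, map_one]
        · rw [h, map_neg, map_one]; decide
      have h2 : ∀ b : ZMod 2, b = 0 ∨ b = 1 := by decide
      refine ⟨{x | f (x i) = 0}, fun u => ?_⟩
      have hpred : ∀ w : ∀ l, ZMod (k l), (∀ l, A l (w l) (u l)) → w = u - e := by
        intro w hw
        funext l
        rw [Pi.sub_apply, (hAe l _ _).1 (hw l)]; ring
      have hfs : f ((u - e) i) = f (u i) - 1 := by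
        rw [Pi.sub_apply, map_sub, hfe]
      rcases h2 (f (u i)) with h | h
      · refine ⟨u, ⟨h, Or.inl rfl⟩, ?_⟩
        rintro w ⟨hw, h1 | h1⟩
        · exact h1
        · have := hpred w h1
          subst this
          simp only [Set.mem_ofPred_eq] at hw
          rw [hfs, h] at hw
          exact absurd hw (by decide)
      · refine ⟨u - e, ⟨?_, Or.inr ?_⟩, ?_⟩
        · simp only [Set.mem_ofPred_eq]
          rw [hfs, h, sub_self]
        · intro l
          rw [hAe l]; simp
        · rintro w ⟨hw, h1 | h1⟩
          · subst h1
            simp only [Set.mem_ofPred_eq] at hw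
            rw [h] at hw
            exact absurd hw (by decide)
          · exact hpred w h1
    · push Not at hno
      obtain ⟨i, hi⟩ := hno
      have hno : ∀ l, l ≠ i → ¬ ∃ a, IsSource (A l) a := fun l hl h => hl (hfirst l i h hi)
      have hdir : ∀ l, ∃ e : ZMod (k l), l ≠ i → ∀ x y, A l x y ↔ y = x + e := by
        intro l
        by_cases hl : l = i
        · exact ⟨0, fun h => absurd hl h⟩
        · obtain ⟨e, -, he⟩ := ocy_dir (hk l) (hA l) (hno l hl)
          exact ⟨e, fun _ => he⟩
      choose e he using hdir
      obtain ⟨T, hT⟩ := ocy_single (hk i) (hA i) hi (hthird i hi)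
      refine ⟨{x | x i ∈ T}, fun u => ?_⟩
      obtain ⟨v, ⟨hvT, hv⟩, huniq⟩ := hT (u i)
      have huniq' : ∀ w : ∀ l, ZMod (k l), w i ∈ T → (w = u ∨ ∀ l, A l (w l) (u l)) → w i = v := by
        intro w hw h
        refine huniq _ ⟨hw, ?_⟩
        rcases h with h | h
        · left; rw [h]
        · right; exact h i
      rcases hv with hv | hv
      · refine ⟨u, ⟨by simpa [← hv] using hvT, Or.inl rfl⟩, ?_⟩
        rintro w ⟨hw, h⟩
        have h3 := huniq' w hw h
        rcases h with h | h
        · exact h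
        · exact absurd (h3.trans hv) (ocy_ne (hA i) (h i))
      · refine ⟨Function.update (u - e) i v, ⟨by simpa using hvT, Or.inr ?_⟩, ?_⟩
        · intro l
          by_cases hl : l = i
          · subst hl; simpa using hv
          · rw [he l hl]; simp [hl]
        · rintro w ⟨hw, h⟩
          have h3 := huniq' w hw h
          rcases h with h | h
          · subst h
            exact absurd h3.symm (ocy_ne (hA i) hv)
          · funext l
            by_cases hl : l = i
            · subst hl; simpa using h3
            · simp only [Function.update_of_ne hl, Pi.sub_apply]
              rw [(he l hl _ _).1 (h l)]; ring
end

section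
/- Let D and F be finite digraphs, each with at least one vertex. The strong product D ⊠ F is an ECD digraph if and only if both D and F are ECD digraphs. -/
/-- Arc relation of the strong product of two digraphs. -/
def strongArc {V W : Type*} (A : V → V → Prop) (B : W → W → Prop) :
    V × W → V × W → Prop :=
  fun p q => (A p.1 q.1 ∧ p.2 = q.2) ∨ (p.1 = q.1 ∧ B p.2 q.2) ∨
    (A p.1 q.1 ∧ B p.2 q.2)

theorem mem_closedOut_strong {V W : Type*} (A : V → V → Prop) (B : W → W → Prop) (p q : V × W) :
    q ∈ closedOut (strongArc A B) p ↔ q.1 ∈ closedOut A p.1 ∧ q.2 ∈ closedOut B p.2 := by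
  obtain ⟨a, b⟩ := p
  obtain ⟨c, d⟩ := q
  simp only [closedOut, strongArc, Set.mem_union, Set.mem_singleton_iff, Set.mem_setOf_eq,
    Prod.mk.injEq]
  grind

theorem isECD_iff {V : Type*} (A : V → V → Prop) (S : Set V) :
    IsECD A S ↔ (∀ v ∈ S, ∀ w ∈ S, ∀ x, x ∈ closedOut A v → x ∈ closedOut A w → v = w) ∧
      ∀ x, ∃ v ∈ S, x ∈ closedOut A v := by
  unfold IsECD
  simp only [Set.eq_empty_iff_forall_notMem, Set.eq_univ_iff_forall, Set.mem_inter_iff,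
    Set.mem_iUnion, exists_prop]
  grind

/-- The strong product `D ⊠ F` of two finite nonempty digraphs is an ECD digraph
iff both `D` and `F` are ECD digraphs. -/
theorem strong_ecd_iff {V W : Type*} [Fintype V] [Fintype W] [Nonempty V] [Nonempty W]
    (A : V → V → Prop) (B : W → W → Prop) :
    IsECDDigraph (strongArc A B) ↔ IsECDDigraph A ∧ IsECDDigraph B := by
  simp only [IsECDDigraph, isECD_iff, mem_closedOut_strong]
  constructor
  · rintro ⟨S, h1, h2⟩
    obtain ⟨x⟩ := ‹Nonempty V›
    obtain ⟨y⟩ := ‹Nonempty W›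
    refine ⟨⟨{d | ∃ f, (d, f) ∈ S ∧ y ∈ closedOut B f}, ?_, ?_⟩,
      ⟨{f | ∃ d, (d, f) ∈ S ∧ x ∈ closedOut A d}, ?_, ?_⟩⟩
    · rintro v ⟨f, hf, hy⟩ w ⟨g, hg, hy'⟩ z hz hz'
      exact congrArg Prod.fst (h1 _ hf _ hg (z, y) ⟨hz, hy⟩ ⟨hz', hy'⟩)
    · intro z
      obtain ⟨⟨d, f⟩, hS, hd, hf⟩ := h2 (z, y)
      exact ⟨d, ⟨f, hS, hf⟩, hd⟩
    · rintro v ⟨f, hf, hy⟩ w ⟨g, hg, hy'⟩ z hz hz'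
      exact congrArg Prod.snd (h1 _ hf _ hg (x, z) ⟨hy, hz⟩ ⟨hy', hz'⟩)
    · intro z
      obtain ⟨⟨d, f⟩, hS, hd, hf⟩ := h2 (x, z)
      exact ⟨f, ⟨d, hS, hd⟩, hf⟩
  · rintro ⟨⟨S, h1, h2⟩, ⟨T, h3, h4⟩⟩
    refine ⟨S ×ˢ T, ?_, ?_⟩
    · rintro v ⟨hv, hv'⟩ w ⟨hw, hw'⟩ z ⟨hz, hz'⟩ ⟨hu, hu'⟩
      exact Prod.ext (h1 _ hv _ hw _ hz hu) (h3 _ hv' _ hw' _ hz' hu')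
    · rintro ⟨x, y⟩
      obtain ⟨d, hd, hx⟩ := h2 x
      obtain ⟨f, hf, hy⟩ := h4 y
      exact ⟨(d, f), ⟨hd, hf⟩, hx, hy⟩
end
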